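/- arXiv:0806.4687 — 4 statements merged into one kernel-verified Lean document; each statement's English description precedes it below -/
import Mathlib

section
/- For any integer n > 1, lim_{p→∞} (1/(2p+1)^n) · Σ_{t ∈ ([−p,p] ∩ ℤ)^n, t ≠ (0,…,0)} 1/gcd(t) = ζ(n+1)/ζ(n), where gcd(t) denotes the greatest common divisor of the entries of t and ζ is the Riemann zeta function. Equivalently, the expected value of the density of the image of a random homomorphism from the free group of rank n to ℤ equals ζ(n+1)/ζ(n). -/
lemma eid_card1 (d p : ℕ) (hd : 0 < d) :
    ((Finset.Icc (-(p : ℤ)) p).filter (fun x => (d : ℤ) ∣ x)).card = 2 * (p / d) + 1 := by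
  have hd' : (0 : ℤ) < d := by exact_mod_cast hd
  have h : (Finset.Icc (-(p : ℤ)) p).filter (fun x => (d : ℤ) ∣ x)
      = (Finset.Icc (-((p / d : ℕ) : ℤ)) ((p / d : ℕ) : ℤ)).image (fun y => (d : ℤ) * y) := by
    ext x
    simp only [Finset.mem_filter, Finset.mem_Icc, Finset.mem_image]
    push_cast
    constructor
    · rintro ⟨⟨h1, h2⟩, y, rfl⟩
      refine ⟨y, ⟨?_, ?_⟩, rfl⟩
      · have : -y ≤ (p : ℤ) / d := by
          rw [Int.le_ediv_iff_mul_le hd']; nlinarith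
        linarith
      · rw [Int.le_ediv_iff_mul_le hd']; nlinarith
    · rintro ⟨y, ⟨h1, h2⟩, rfl⟩
      have h1' : -y ≤ (p : ℤ) / d := by linarith
      rw [Int.le_ediv_iff_mul_le hd'] at h1' h2
      exact ⟨⟨by nlinarith, by nlinarith⟩, dvd_mul_right _ _⟩
  rw [h, Finset.card_image_of_injective _ (fun a b hab => by
    simpa [hd.ne'] using hab), Int.card_Icc]
  omega

/-- nonzero points of the box divisible by `d` -/
noncomputable def eidN (n d p : ℕ) : Finset (Fin n → ℤ) :=
  ((Fintype.piFinset fun _ : Fin n => Finset.Icc (-(p : ℤ)) p).filter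
            (fun t => t ≠ 0)).filter (fun t => (d : ℤ) ∣ Finset.univ.gcd t)

lemma eid_card (n d p : ℕ) (hd : 0 < d) :
    (eidN n d p).card + 1 = (2 * (p / d) + 1) ^ n := by
  have h : insert 0 (eidN n d p) = Fintype.piFinset fun _ : Fin n =>
      (Finset.Icc (-(p : ℤ)) p).filter (fun x => (d : ℤ) ∣ x) := by
    ext t
    simp only [eidN, Finset.mem_insert, Finset.mem_filter, Fintype.mem_piFinset,
      Finset.dvd_gcd_iff, Finset.mem_univ, true_imp_iff]
    constructor
    · rintro (rfl | ⟨⟨h1, h2⟩, h3⟩)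
      · intro i; simp
      · exact fun i => ⟨h1 i, h3 i⟩
    · intro h
      by_cases ht : t = 0
      · exact Or.inl ht
      · exact Or.inr ⟨⟨fun i => (h i).1, ht⟩, fun i => (h i).2⟩
  rw [← Finset.card_insert_of_notMem (a := 0) (by simp [eidN]), h, Fintype.card_piFinset]
  simp [eid_card1 d p hd]

lemma eid_card_zero (n d p : ℕ) (hn : n ≠ 0) (hd : p < d) : (eidN n d p).card = 0 := by
  have := eid_card n d p (by omega)
  rw [Nat.div_eq_of_lt hd] at this
  simpa using this

lemma eid_ratio (d p : ℕ) (hd : 0 < d) :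
    |((2 * (p / d : ℕ) + 1 : ℝ)) / (2 * p + 1) - 1 / d| ≤ 1 / (2 * p + 1) := by
  have hd' : (0 : ℝ) < d := by exact_mod_cast hd
  have hp : (0 : ℝ) < 2 * p + 1 := by positivity
  have e : (p : ℝ) = d * (p / d : ℕ) + (p % d : ℕ) := by
    exact_mod_cast (Nat.div_add_mod p d).symm
  have hr : ((p % d : ℕ) : ℝ) + 1 ≤ d := by exact_mod_cast Nat.mod_lt p hd
  have hr0 : (0 : ℝ) ≤ ((p % d : ℕ) : ℝ) := by positivity
  generalize ((p / d : ℕ) : ℝ) = q at *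
  generalize ((p % d : ℕ) : ℝ) = r at *
  have : (2 * q + 1) / (2 * (p : ℝ) + 1) - 1 / d = ((d - 2 * r - 1) / d) / (2 * p + 1) := by
    field_simp
    rw [e]; ring
  rw [this, abs_div, abs_of_pos hp]
  gcongr
  rw [abs_div, abs_of_pos hd', div_le_one hd', abs_le]
  constructor <;> linarith

lemma eid_inv_tendsto : Filter.Tendsto (fun p : ℕ => 1 / (2 * (p : ℝ) + 1)) Filter.atTop (nhds 0) := by
  apply Filter.Tendsto.div_atTop tendsto_const_nhds
  apply Filter.tendsto_atTop_add_const_right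
  exact Filter.Tendsto.const_mul_atTop (by norm_num) tendsto_natCast_atTop_atTop

lemma eid_ratio_tendsto (d : ℕ) (hd : 0 < d) :
    Filter.Tendsto (fun p : ℕ => ((2 * (p / d : ℕ) + 1 : ℝ)) / (2 * p + 1)) Filter.atTop
      (nhds (1 / (d : ℝ))) := by
  rw [tendsto_iff_dist_tendsto_zero]
  refine squeeze_zero (fun _ => dist_nonneg) (fun p => ?_) eid_inv_tendsto
  rw [Real.dist_eq]
  exact eid_ratio d p hd

lemma eid_card_real (n d p : ℕ) (hd : 0 < d) :
    ((eidN n d p).card : ℝ) = (2 * (p / d : ℕ) + 1 : ℝ) ^ n - 1 := by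
  have := eid_card n d p hd
  rw [eq_sub_iff_add_eq]
  exact_mod_cast this

lemma eid_dens_tendsto (n d : ℕ) (hn : n ≠ 0) (hd : 0 < d) :
    Filter.Tendsto (fun p : ℕ => ((eidN n d p).card : ℝ) / (2 * p + 1) ^ n) Filter.atTop
      (nhds (1 / (d : ℝ) ^ n)) := by
  have h1 := ((eid_ratio_tendsto d hd).pow n).sub (eid_inv_tendsto.pow n)
  rw [zero_pow hn, sub_zero, one_div_pow] at h1
  refine h1.congr fun p => ?_
  rw [eid_card_real n d p hd, sub_div, div_pow, div_pow, one_pow]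

lemma eid_dens_le (n d p : ℕ) (hn : n ≠ 0) (hd : 0 < d) :
    ((eidN n d p).card : ℝ) / (2 * p + 1) ^ n ≤ 2 ^ n * (1 / (d : ℝ) ^ n) := by
  by_cases h : p < d
  · rw [eid_card_zero n d p hn h]; simp
  have hd' : (0 : ℝ) < d := by exact_mod_cast hd
  have hp : (0 : ℝ) < 2 * p + 1 := by positivity
  have hdp : (d : ℝ) ≤ 2 * p + 1 := by exact_mod_cast (by omega : d ≤ 2 * p + 1)
  have h1 := (abs_le.1 (eid_ratio d p hd)).2
  have h2 : 1 / (2 * (p : ℝ) + 1) ≤ 1 / d := one_div_le_one_div_of_le hd' hdp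
  calc ((eidN n d p).card : ℝ) / (2 * p + 1) ^ n
      ≤ (2 * (p / d : ℕ) + 1 : ℝ) ^ n / (2 * p + 1) ^ n := by
        gcongr
        rw [eid_card_real n d p hd]; linarith
    _ = ((2 * (p / d : ℕ) + 1 : ℝ) / (2 * p + 1)) ^ n := by rw [div_pow]
    _ ≤ (2 * (1 / (d : ℝ))) ^ n := by
        gcongr
        linarith
    _ = _ := by rw [mul_pow, one_div_pow]

/-- `m ↦ 1 / m` -/
noncomputable def eidInv : ArithmeticFunction ℂ := ⟨fun m => 1 / (m : ℂ), by simp⟩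

/-- Moebius inverse of `eidInv` -/
noncomputable def eidF : ArithmeticFunction ℂ :=
  (ArithmeticFunction.moebius : ArithmeticFunction ℂ) * eidInv

lemma eidF_sum (m : ℕ) : ∑ d ∈ m.divisors, eidF d = 1 / (m : ℂ) := by
  rw [← ArithmeticFunction.coe_mul_zeta_apply, eidF, mul_right_comm,
    ArithmeticFunction.coe_moebius_mul_coe_zeta, one_mul]
  rfl

lemma eidInv_term (n : ℕ) (m : ℕ) :
    LSeries.term (fun k => eidInv k) n m = LSeries.term 1 ((n + 1 : ℕ) : ℂ) m := by
  rcases eq_or_ne m 0 with rfl | hm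
  · simp
  · rw [LSeries.term_of_ne_zero hm, LSeries.term_of_ne_zero hm, Complex.cpow_natCast,
      Complex.cpow_natCast]
    simp only [eidInv, ArithmeticFunction.coe_mk, Pi.one_apply]
    rw [div_div, pow_succ']

lemma eidInv_hasSum (n : ℕ) (hn : 1 < n) :
    LSeriesHasSum (fun k => eidInv k) n (riemannZeta (n + 1)) := by
  have h := LSeriesHasSum_one (s := ((n + 1 : ℕ) : ℂ)) (by
    rw [Complex.natCast_re]; exact_mod_cast (by omega : 1 < n + 1))
  unfold LSeriesHasSum at *
  rw [funext (eidInv_term n)]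
  simpa using h

lemma eidMu_hasSum (n : ℕ) (hn : 1 < n) :
    LSeriesHasSum (fun k => (ArithmeticFunction.moebius : ArithmeticFunction ℂ) k) n
      (riemannZeta n)⁻¹ := by
  have hs : 1 < (n : ℂ).re := by rw [Complex.natCast_re]; exact_mod_cast hn
  have h1 := ArithmeticFunction.LSeries_zeta_mul_Lseries_moebius hs
  rw [ArithmeticFunction.LSeries_zeta_eq_riemannZeta hs] at h1
  have h2 := (ArithmeticFunction.LSeriesSummable_moebius_iff.2 hs).LSeriesHasSum
  rw [eq_inv_of_mul_eq_one_right h1] at h2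
  simpa using h2

lemma eidF_hasSum (n : ℕ) (hn : 1 < n) :
    HasSum (fun d : ℕ => eidF d * (1 / (d : ℂ) ^ n)) (riemannZeta (n + 1) / riemannZeta n) := by
  have h := ArithmeticFunction.LSeriesHasSum_mul (eidMu_hasSum n hn) (eidInv_hasSum n hn)
  unfold LSeriesHasSum at h
  rw [div_eq_inv_mul]
  convert h using 2 with d
  rcases eq_or_ne d 0 with rfl | hm
  · simp
  · rw [LSeries.term_of_ne_zero hm, Complex.cpow_natCast, eidF]
    ring

lemma eid_sum (n p : ℕ) (hn : n ≠ 0) :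
    ∑ t ∈ (Fintype.piFinset fun _ : Fin n => Finset.Icc (-(p : ℤ)) p).filter
            (fun t => t ≠ 0), (1 / ((Finset.univ.gcd t : ℤ) : ℂ))
      = ∑' d : ℕ, eidF d * ((eidN n d p).card : ℂ) := by
  rw [tsum_eq_sum (s := Finset.Icc 1 p)]
  · have key : ∀ t ∈ (Fintype.piFinset fun _ : Fin n => Finset.Icc (-(p : ℤ)) p).filter
            (fun t => t ≠ 0), (1 / ((Finset.univ.gcd t : ℤ) : ℂ)) =
          ∑ d ∈ Finset.Icc 1 p, if (d : ℤ) ∣ Finset.univ.gcd t then eidF d else 0 := by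
      intro t ht
      rw [Finset.mem_filter, Fintype.mem_piFinset] at ht
      obtain ⟨hb, h0⟩ := ht
      obtain ⟨i, hi⟩ := Function.ne_iff.1 h0
      have hg0 : 0 ≤ Finset.univ.gcd t := Int.nonneg_of_normalize_eq_self Finset.normalize_gcd
      have hdv : Finset.univ.gcd t ∣ t i := Finset.gcd_dvd (Finset.mem_univ i)
      obtain ⟨g, hg⟩ := Int.eq_ofNat_of_zero_le hg0
      rw [hg] at hdv ⊢
      have hne : g ≠ 0 := by
        rintro rfl
        exact hi (by simpa using hdv)
      have hle : g ≤ p := by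
        have h1 := Int.natAbs_dvd_natAbs.2 hdv
        have h2 := Nat.le_of_dvd (Int.natAbs_pos.2 hi) h1
        have h3 := Finset.mem_Icc.1 (hb i)
        simp only [Int.natAbs_natCast] at h2
        omega
      rw [← Finset.sum_filter, Int.cast_natCast, ← eidF_sum]
      apply Finset.sum_congr _ fun _ _ => rfl
      ext d
      simp only [Nat.mem_divisors, Finset.mem_filter, Finset.mem_Icc, Int.natCast_dvd_natCast]
      constructor
      · rintro ⟨h, -⟩
        exact ⟨⟨Nat.pos_of_dvd_of_pos h (Nat.pos_of_ne_zero hne),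
          (Nat.le_of_dvd (Nat.pos_of_ne_zero hne) h).trans hle⟩, h⟩
      · rintro ⟨-, h⟩
        exact ⟨h, hne⟩
    rw [Finset.sum_congr rfl key, Finset.sum_comm]
    refine Finset.sum_congr rfl fun d _ => ?_
    rw [← Finset.sum_filter, Finset.sum_const, nsmul_eq_mul, mul_comm]
    rfl
  · intro d hd
    rcases Nat.eq_zero_or_pos d with rfl | h
    · simp
    · rw [eid_card_zero n d p hn (by rw [Finset.mem_Icc] at hd; omega)]
      simp


/-- For `n > 1`,
`lim_{p→∞} (2p+1)^{-n} Σ_{t ∈ ([-p,p] ∩ ℤ)^n, t ≠ 0} 1/gcd(t) = ζ(n+1)/ζ(n)`: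
the expected value of the density of the image of a random homomorphism from the free
group of rank `n` to `ℤ` equals `ζ(n+1)/ζ(n)`. -/
theorem expected_image_density_free_to_int {n : ℕ} (hn : 1 < n) :
    Filter.Tendsto (fun p : ℕ =>
      (1 / (2 * (p : ℂ) + 1) ^ n) *
        ∑ t ∈ (Fintype.piFinset fun _ : Fin n => Finset.Icc (-(p : ℤ)) p).filter
            (fun t => t ≠ 0),
          (1 / ((Finset.univ.gcd t : ℤ) : ℂ)))
      Filter.atTop (nhds (riemannZeta (n + 1) / riemannZeta n)) := by
  have hn0 : n ≠ 0 := by omega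
  have hF := eidF_hasSum n hn
  rw [← hF.tsum_eq]
  have hfun : ∀ p : ℕ, (1 / (2 * (p : ℂ) + 1) ^ n) *
        ∑ t ∈ (Fintype.piFinset fun _ : Fin n => Finset.Icc (-(p : ℤ)) p).filter
            (fun t => t ≠ 0), (1 / ((Finset.univ.gcd t : ℤ) : ℂ))
      = ∑' d : ℕ, eidF d * ((((eidN n d p).card : ℝ) / (2 * p + 1) ^ n : ℝ) : ℂ) := by
    intro p
    rw [eid_sum n p hn0, ← tsum_mul_left]
    refine tsum_congr fun d => ?_
    push_cast
    ring
  simp_rw [hfun]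
  refine tendsto_tsum_of_dominated_convergence
    (bound := fun d : ℕ => 2 ^ n * ‖eidF d * (1 / (d : ℂ) ^ n)‖) (hF.summable.norm.mul_left _) ?_ ?_
  · intro d
    rcases Nat.eq_zero_or_pos d with rfl | h
    · simp
    · have h1 := (Complex.continuous_ofReal.tendsto _).comp (eid_dens_tendsto n d hn0 h)
      have h2 := h1.const_mul (eidF d)
      simpa [Function.comp_def] using h2
  · refine Filter.Eventually.of_forall fun p d => ?_
    rcases Nat.eq_zero_or_pos d with rfl | h
    · simp
    · have h1 := eid_dens_le n d p hn0 h
      have h0 : 0 ≤ ((eidN n d p).card : ℝ) / (2 * p + 1) ^ n := by positivity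
      rw [norm_mul, norm_mul, Complex.norm_real, Real.norm_of_nonneg h0]
      have h2 : ‖1 / (d : ℂ) ^ n‖ = 1 / (d : ℝ) ^ n := by simp
      rw [h2, mul_left_comm]
      gcongr
end

section
/- Let G be the free group on generators a_1,…,a_m (m ≥ 1) and let H be a free group of rank n > 1. Then the expected density of the image of a random homomorphism is 0: lim_{p→∞} (1/|H_p|^m) · Σ_{φ ∈ (H_p)^m} \overline{D}(φ(G)) = 0, where the sum is over all homomorphisms φ : G → H identified with m-tuples of elements of H_p, and \overline{D}(φ(G)) is the upper asymptotic density of the image subgroup φ(G) in H. -/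
/-- The number of elements of the free group of rank `n` of word length at most `p`,
i.e. `|H_p|`. -/
noncomputable def ballCount (n p : ℕ) : ℕ :=
  Nat.card {w : FreeGroup (Fin n) // FreeGroup.norm w ≤ p}

/-- The upper asymptotic density `\overline{D}(S) = limsup_p |S ∩ H_p| / |H_p|` of a
subset `S` of the free group of rank `n`. -/
noncomputable def upperDensity {n : ℕ} (S : Set (FreeGroup (Fin n))) : ℝ :=
  Filter.limsup (fun p : ℕ =>
    (Nat.card {w : FreeGroup (Fin n) // w ∈ S ∧ FreeGroup.norm w ≤ p} : ℝ) /
      (ballCount n p : ℝ)) Filter.atTop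

namespace EID
open FreeGroup

variable {α : Type*} [DecidableEq α]

/-- The words agree on the first `s` letters. -/
def Agr (s : ℕ) (g h : FreeGroup α) : Prop :=
  s ≤ norm g ∧ s ≤ norm h ∧ g.toWord.take s = h.toWord.take s

/-- Prefix of length `s`. -/
def pre (s : ℕ) (g : FreeGroup α) : FreeGroup α := mk (g.toWord.take s)

theorem norm_mk_red {L : List (α × Bool)} (h : IsReduced L) : norm (mk L) = L.length := by
  simp [FreeGroup.norm, toWord_mk, h.reduce_eq]

theorem red_invRev {L : List (α × Bool)} (h : IsReduced L) : IsReduced (invRev L) := by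
  rw [isReduced_iff_reduce_eq, reduce_invRev, h.reduce_eq]

theorem red_join {a b : α × Bool} {L M : List (α × Bool)} (h1 : IsReduced (a :: L))
    (h2 : IsReduced (b :: M)) (hab : a ≠ b) : IsReduced (invRev (a :: L) ++ (b :: M)) := by
  have h3 := red_invRev h1
  unfold FreeGroup.IsReduced at *
  rw [List.isChain_append]
  refine ⟨h3, h2, ?_⟩
  intro x hx y hy
  simp [invRev] at hx hy
  subst hx hy
  intro h
  simp at h ⊢
  rcases a with ⟨a1, a2⟩
  rcases b with ⟨b1, b2⟩
  simp at *
  cases a2 <;> cases b2 <;> simp_all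

theorem agr_aux (L : List (α × Bool)) : ∀ (M : List (α × Bool)) (s : ℕ), IsReduced L → IsReduced M →
    norm ((mk L)⁻¹ * mk M) + 2 * s ≤ L.length + M.length →
    s ≤ L.length ∧ s ≤ M.length ∧ L.take s = M.take s := by
  induction L with
  | nil =>
    intro M s _ hM h
    have h1 : norm ((mk ([] : List (α × Bool)))⁻¹ * mk M) = M.length := by
      rw [← one_eq_mk]; simp [norm_mk_red hM]
    rw [h1] at h
    have : s = 0 := by simp at h; omega
    subst this; simp
  | cons a L ih =>
    intro M s hL hM h
    cases M with
    | nil =>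
      have h1 : norm ((mk (a :: L))⁻¹ * mk ([] : List (α × Bool))) = (a :: L).length := by
        rw [← one_eq_mk, mul_one, norm_inv_eq, norm_mk_red hL]
      rw [h1] at h
      have : s = 0 := by simp at h; omega
      subst this; simp
    | cons b M =>
      by_cases hab : a = b
      · subst hab
        cases s with
        | zero => simp
        | succ s =>
          have e : (mk (a :: L))⁻¹ * mk (a :: M) = (mk L)⁻¹ * mk M := by
            have : ∀ N : List (α × Bool), mk (a :: N) = mk [a] * mk N := by
              intro N; rw [mul_mk]; rfl
            rw [this L, this M]; group
          rw [e] at h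
          have hL' : IsReduced L := by unfold FreeGroup.IsReduced at *; exact hL.tail
          have hM' : IsReduced M := by unfold FreeGroup.IsReduced at *; exact hM.tail
          have := ih M s hL' hM' (by simp only [List.length_cons] at h; omega)
          simpa using this
      · have h1 : norm ((mk (a :: L))⁻¹ * mk (b :: M)) = (a :: L).length + (b :: M).length := by
          rw [inv_mk, mul_mk, norm_mk_red (red_join hL hM hab), List.length_append, invRev_length]
        rw [h1] at h
        have : s = 0 := by omega
        subst this; simp

theorem agr_of_norm {s : ℕ} {g h : FreeGroup α} (H : norm (g⁻¹ * h) + 2 * s ≤ norm g + norm h) :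
    Agr s g h := by
  have := agr_aux g.toWord h.toWord s isReduced_toWord isReduced_toWord
    (by rw [mk_toWord, mk_toWord]; exact H)
  exact this

theorem norm_pre_le (s : ℕ) (g : FreeGroup α) : norm (pre s g) ≤ s :=
  norm_mk_le.trans (by simp)

theorem norm_strip (s : ℕ) (g : FreeGroup α) : norm ((pre s g)⁻¹ * g) ≤ norm g - s := by
  have : (pre s g)⁻¹ * g = mk (g.toWord.drop s) := by
    rw [inv_mul_eq_iff_eq_mul, pre, mul_mk, List.take_append_drop, mk_toWord]
  rw [this]
  exact norm_mk_le.trans (by simp [FreeGroup.norm])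

theorem Agr.pre_eq {s : ℕ} {g h : FreeGroup α} (H : Agr s g h) : pre s g = pre s h := by
  rw [pre, pre, H.2.2]

theorem Agr.symm {s : ℕ} {g h : FreeGroup α} (H : Agr s g h) : Agr s h g :=
  ⟨H.2.1, H.1, H.2.2.symm⟩

theorem Agr.trans {s : ℕ} {g h k : FreeGroup α} (H : Agr s g h) (H' : Agr s h k) : Agr s g k :=
  ⟨H.1, H'.2.1, H.2.2.trans H'.2.2⟩

theorem self_strip {s : ℕ} {w : FreeGroup α} (H : Agr s w w⁻¹) (hw : 2 * s ≤ norm w) :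
    norm (w * pre s w) ≤ norm w - s ∧ pre s (w * pre s w) = pre s w := by
  constructor
  · rw [← norm_inv_eq, mul_inv_rev, H.pre_eq]
    have := norm_strip s w⁻¹
    rwa [norm_inv_eq (x := w)] at this
  · apply Agr.pre_eq
    apply agr_of_norm
    have h1 : (w * pre s w)⁻¹ * w = (pre s w)⁻¹ := by group
    rw [h1, norm_inv_eq]
    have h2 := norm_pre_le s w
    have h3 := norm_mul_le (w * pre s w) (pre s w)⁻¹
    rw [mul_inv_cancel_right, norm_inv_eq] at h3
    omega

/-- letters -/
def lt {G : Type*} [Group G] {ι : Type*} (f : ι → G) (x : ι × Bool) : G := cond x.2 (f x.1) (f x.1)⁻¹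

theorem prod_lower {ι : Type*} (f : ι → FreeGroup α) (s C : ℕ)
    (h1 : ∀ i, 2 * s + C ≤ norm (f i))
    (h2 : ∀ x y : ι × Bool, x ≠ y → ¬ Agr s (lt f x) (lt f y)) (L : List (ι × Bool)) :
    IsReduced L → C * L.length ≤ norm (L.map (lt f)).prod ∧
      ∀ x ∈ L.head?, Agr s (lt f x) (L.map (lt f)).prod := by
  have h1' : ∀ x, 2 * s + C ≤ norm (lt f x) := by
    rintro ⟨i, b⟩
    cases b
    · simpa [lt] using h1 i
    · simpa [lt] using h1 i
  induction L with
  | nil => intro _; simp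
  | cons x L ih =>
    intro hL
    cases L with
    | nil =>
      have := h1' x
      simp
      refine ⟨by omega, by omega, by omega, rfl⟩
    | cons y L =>
      have hL' : IsReduced (y :: L) := by unfold FreeGroup.IsReduced at *; exact hL.tail
      obtain ⟨i1, i2⟩ := ih hL'
      have i3 := i2 y (by simp)
      rw [List.map_cons, List.prod_cons]
      set v := ((y :: L).map (lt f)).prod with hv
      have hxy : (x.1, !x.2) ≠ y := by
        unfold FreeGroup.IsReduced at hL
        rw [List.isChain_cons_cons] at hL
        rintro rfl
        simpa using hL.1
      have hinv : lt f (x.1, !x.2) = (lt f x)⁻¹ := by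
        rcases x with ⟨i, b⟩; cases b <;> simp [lt]
      have key : norm (lt f x) + norm v < norm (lt f x * v) + 2 * s := by
        by_contra hc
        push Not at hc
        have : Agr s (lt f (x.1, !x.2)) v := by
          apply agr_of_norm
          rw [hinv, inv_inv, norm_inv_eq]
          exact hc
        exact h2 _ _ hxy (this.trans i3.symm)
      have hx := h1' x
      refine ⟨?_, ?_⟩
      · rw [List.length_cons, mul_add, mul_one]
        omega
      · intro z hz
        simp at hz
        subst hz
        apply agr_of_norm
        rw [inv_mul_cancel_left]
        omega

theorem lift_lower {ι : Type*} [DecidableEq ι] (f : ι → FreeGroup α) (s C : ℕ)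
    (h1 : ∀ i, 2 * s + C ≤ norm (f i))
    (h2 : ∀ x y : ι × Bool, x ≠ y → ¬ Agr s (lt f x) (lt f y)) (g : FreeGroup ι) :
    C * norm g ≤ norm (FreeGroup.lift f g) := by
  have := (prod_lower f s C h1 h2 g.toWord isReduced_toWord).1
  rw [← mk_toWord (x := g), lift_mk, mk_toWord]
  exact this

theorem ball_fin (n p : ℕ) : {w : FreeGroup (Fin n) | norm w ≤ p}.Finite := by
  apply Set.Finite.of_finite_image (f := toWord)
  · exact (List.finite_length_le (Fin n × Bool) p).subset (by rintro _ ⟨w, hw, rfl⟩; exact hw)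
  · exact toWord_injective.injOn

/-- ball as a finset -/
noncomputable def bF (n p : ℕ) : Finset (FreeGroup (Fin n)) := (ball_fin n p).toFinset

theorem mem_bF {n p : ℕ} {w : FreeGroup (Fin n)} : w ∈ bF n p ↔ norm w ≤ p := by simp [bF]

theorem card_bF (n p : ℕ) : (bF n p).card = ballCount n p := by
  rw [ballCount, bF, ← Set.ncard_eq_toFinset_card _ (ball_fin n p)]
  rfl

theorem upper (n p : ℕ) : (bF n p).card ≤ (2 * n + 1) ^ p := by
  induction p with
  | zero =>
    have : bF n 0 = {1} := by ext w; simp [mem_bF]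
    simp [this]
  | succ p ih =>
    let F : Option (Fin n × Bool) × FreeGroup (Fin n) → FreeGroup (Fin n) :=
      fun x => (x.1.elim 1 fun a => mk [a]) * x.2
    have : bF n (p + 1) ⊆ ((Finset.univ : Finset (Option (Fin n × Bool))) ×ˢ bF n p).image F := by
      intro w hw
      rw [mem_bF] at hw
      rw [Finset.mem_image]
      rcases hL : w.toWord with _ | ⟨a, L⟩
      · refine ⟨(none, 1), by simp [mem_bF], ?_⟩
        simp [F]
        exact (toWord_eq_nil_iff.1 hL).symm
      · refine ⟨(some a, mk L), ?_, ?_⟩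
        · simp only [Finset.mem_product, Finset.mem_univ, true_and, mem_bF]
          refine norm_mk_le.trans ?_
          rw [FreeGroup.norm, hL] at hw; simpa using hw
        · simp [F]
          rw [← hL, mk_toWord]
    have h2 := (Finset.card_le_card this).trans Finset.card_image_le
    rw [Finset.card_product] at h2
    simp at h2
    calc _ ≤ _ := h2
      _ ≤ (n * 2 + 1) * (2 * n + 1) ^ p := by gcongr
      _ = _ := by ring

theorem dbl {n : ℕ} (hn : 1 < n) (p : ℕ) : 2 * (bF n p).card ≤ (bF n (p + 1)).card := by
  let a : Fin n := ⟨0, by omega⟩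
  let c : Fin n := ⟨1, hn⟩
  have hac : a ≠ c := by simp [a, c]
  let q : FreeGroup (Fin n) → Fin n := fun w => if (w.toWord.head?.map Prod.fst) = some a then c else a
  have hred : ∀ (b : Bool) w, IsReduced ((q w, b) :: w.toWord) := by
    intro b w
    have h := isReduced_toWord (x := w)
    have hq : ∀ x ∈ w.toWord.head?, q w ≠ x.1 := by
      intro x hx
      simp only [Option.mem_def] at hx
      simp only [q, hx]
      by_cases h : x.1 = a
      · simp [h, hac.symm]
      · simp [h, Ne.symm h]
    unfold FreeGroup.IsReduced at *
    rw [List.isChain_cons]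
    refine ⟨?_, h⟩
    intro y hy h'
    exact absurd h' (hq y hy)
  let F : Bool × FreeGroup (Fin n) → FreeGroup (Fin n) := fun x => mk ((q x.2, x.1) :: x.2.toWord)
  have hF : ∀ x, (F x).toWord = (q x.2, x.1) :: x.2.toWord := by
    intro x
    simp only [F]
    rw [toWord_mk, (hred _ _).reduce_eq]
  have : ((Finset.univ : Finset Bool) ×ˢ bF n p).card ≤ (bF n (p + 1)).card := by
    apply Finset.card_le_card_of_injOn F
    · intro x hx
      simp [mem_bF] at hx ⊢
      rw [FreeGroup.norm, hF]
      simpa [FreeGroup.norm] using hx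
    · intro x _ y _ hxy
      have := congrArg toWord hxy
      rw [hF, hF] at this
      simp at this
      exact Prod.ext this.1.2 this.2
  simpa using this

theorem dbl_pow {n : ℕ} (hn : 1 < n) (p s : ℕ) : 2 ^ s * (bF n p).card ≤ (bF n (p + s)).card := by
  induction s with
  | zero => simp
  | succ s ih =>
    have := dbl hn (p + s)
    rw [← add_assoc, pow_succ]
    nlinarith

theorem two_pow_le {n : ℕ} (hn : 1 < n) (p : ℕ) : 2 ^ p ≤ (bF n p).card := by
  have := dbl_pow hn 0 p
  have h : bF n 0 = {1} := by ext w; simp [mem_bF]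
  simpa [h] using this

theorem bad_bound {m n : ℕ} (hn : 1 < n) {p s : ℕ} (hs : s ≤ p)
    (S : Finset (Fin m → FreeGroup (Fin n))) (hS : ∀ f ∈ S, ∀ i, norm (f i) ≤ p) (i : Fin m)
    (T : (Fin m → FreeGroup (Fin n)) → FreeGroup (Fin n))
    (hT : ∀ f ∈ S, norm (T f) ≤ p - s)
    (hinj : ∀ f ∈ S, ∀ f' ∈ S, (∀ j, j ≠ i → f j = f' j) → T f = T f' → f i = f' i) :
    2 ^ s * S.card ≤ (bF n p).card ^ m := by
  have h1 : S.card ≤ (Fintype.piFinset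
      (fun j => if j = i then bF n (p - s) else bF n p)).card := by
    apply Finset.card_le_card_of_injOn (fun f => Function.update f i (T f))
    · intro f hf
      simp only [Finset.mem_coe, Fintype.mem_piFinset]
      intro j
      by_cases hj : j = i
      · subst hj
        simpa [mem_bF] using hT f hf
      · simpa [hj, mem_bF] using hS f hf j
    · intro f hf f' hf' h
      have h' : ∀ j, Function.update f i (T f) j = Function.update f' i (T f') j :=
        fun j => congrFun h j
      have ho : ∀ j, j ≠ i → f j = f' j := by
        intro j hj
        simpa [hj] using h' j
      have hi : T f = T f' := by simpa using h' i
      funext j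
      by_cases hj : j = i
      · subst hj; exact hinj f hf f' hf' ho hi
      · exact ho j hj
  have h2 : 2 ^ s * (bF n (p - s)).card ≤ (bF n p).card := by
    have := dbl_pow hn (p - s) s
    rwa [Nat.sub_add_cancel hs] at this
  rw [Fintype.card_piFinset] at h1
  calc 2 ^ s * S.card ≤ 2 ^ s * ∏ j, (if j = i then bF n (p - s) else bF n p).card := by gcongr
    _ = ∏ j, ((if j = i then 2 ^ s else 1) * (if j = i then bF n (p - s) else bF n p).card) := by
      rw [Finset.prod_mul_distrib]; simp
    _ ≤ ∏ j : Fin m, (bF n p).card := by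
      apply Finset.prod_le_prod'
      intro j _
      by_cases hj : j = i
      · simpa [hj] using h2
      · simp [hj]
    _ = _ := by simp

open Classical in
/-- bad tuples -/
noncomputable def bad (m n p s : ℕ) : Finset (Fin m → FreeGroup (Fin n)) :=
  (Fintype.piFinset (fun _ => bF n p)).filter fun f =>
    (∃ i, norm (f i) ≤ p - s) ∨ ∃ x y : Fin m × Bool, x ≠ y ∧ Agr s (lt f x) (lt f y)

theorem norm_lt {m n : ℕ} (f : Fin m → FreeGroup (Fin n)) (x : Fin m × Bool) :
    norm (lt f x) = norm (f x.1) := by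
  rcases x with ⟨i, b⟩
  cases b <;> simp [lt]

theorem bad_card {m n p s : ℕ} (hn : 1 < n) (hs : 3 * s ≤ p) :
    2 ^ s * (bad m n p s).card ≤ (m + (m * 2) * (m * 2)) * (bF n p).card ^ m := by
  classical
  let P : Finset (Fin m → FreeGroup (Fin n)) := Fintype.piFinset (fun _ => bF n p)
  have hP : ∀ f, f ∈ P ↔ ∀ i, norm (f i) ≤ p := by
    intro f; simp [P, Fintype.mem_piFinset, mem_bF]
  let S1 : Fin m → Finset (Fin m → FreeGroup (Fin n)) :=
    fun i => P.filter fun f => norm (f i) ≤ p - s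
  let S2 : (Fin m × Bool) × (Fin m × Bool) → Finset (Fin m → FreeGroup (Fin n)) :=
    fun z => P.filter fun f => (∀ i, p - s < norm (f i)) ∧ z.1 ≠ z.2 ∧ Agr s (lt f z.1) (lt f z.2)
  have hsub : bad m n p s ⊆ (Finset.univ.biUnion S1) ∪ (Finset.univ.biUnion S2) := by
    intro f hf
    rw [bad, Finset.mem_filter] at hf
    obtain ⟨hf, hf'⟩ := hf
    by_cases h : ∃ i, norm (f i) ≤ p - s
    · obtain ⟨i, hi⟩ := h
      apply Finset.mem_union_left
      simp only [Finset.mem_biUnion]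
      exact ⟨i, Finset.mem_univ _, Finset.mem_filter.2 ⟨hf, hi⟩⟩
    · obtain ⟨x, y, hxy, ha⟩ := hf'.resolve_left h
      push Not at h
      apply Finset.mem_union_right
      simp only [Finset.mem_biUnion]
      exact ⟨(x, y), Finset.mem_univ _, Finset.mem_filter.2 ⟨hf, h, hxy, ha⟩⟩
  have b1 : ∀ i, 2 ^ s * (S1 i).card ≤ (bF n p).card ^ m := by
    intro i
    apply bad_bound hn (p := p) (s := s) (by omega) (S1 i) _ i (fun f => f i)
    · intro f hf
      exact (Finset.mem_filter.1 hf).2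
    · intro f _ f' _ _ h; exact h
    · intro f hf
      exact (hP f).1 (Finset.mem_filter.1 hf).1
  have b2 : ∀ z, 2 ^ s * (S2 z).card ≤ (bF n p).card ^ m := by
    rintro ⟨x, y⟩
    have hball : ∀ f ∈ S2 (x, y), ∀ i, norm (f i) ≤ p := fun f hf =>
      (hP f).1 (Finset.mem_filter.1 hf).1
    by_cases hxy : x.1 = y.1
    · have hself : ∀ f ∈ S2 (x, y), Agr s (f x.1) (f x.1)⁻¹ ∧ 2 * s ≤ norm (f x.1) := by
        intro f hf
        obtain ⟨_, h1, h2, h3⟩ := Finset.mem_filter.1 hf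
        refine ⟨?_, ?_⟩
        · rcases x with ⟨i, b⟩
          rcases y with ⟨j, c⟩
          simp only at hxy
          subst hxy
          cases b <;> cases c
          · simp at h2
          · exact h3.symm
          · exact h3
          · simp at h2
        · have := h1 x.1
          omega
      apply bad_bound hn (p := p) (s := s) (by omega) (S2 (x, y)) hball x.1
        (fun f => f x.1 * pre s (f x.1))
      · intro f hf
        have h := (self_strip (hself f hf).1 (hself f hf).2).1
        have := hball f hf x.1
        omega
      · intro f hf f' hf' _ h
        have e1 := (self_strip (hself f hf).1 (hself f hf).2).2
        have e2 := (self_strip (hself f' hf').1 (hself f' hf').2).2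
        rw [h, e2] at e1
        rw [e1] at h
        exact mul_right_cancel h
    · apply bad_bound hn (p := p) (s := s) (by omega) (S2 (x, y)) hball x.1
        (fun f => (pre s (lt f y))⁻¹ * lt f x)
      · intro f hf
        obtain ⟨_, h1, h2, h3⟩ := Finset.mem_filter.1 hf
        have h4 := norm_strip s (lt f x)
        rw [h3.pre_eq, norm_lt] at h4
        have := hball f hf x.1
        simp only at h4 ⊢
        omega
      · intro f hf f' hf' ho h
        have e : lt f y = lt f' y := by
          simp only [lt, ho y.1 (Ne.symm hxy)]
        simp only [e] at h
        have h := mul_left_cancel h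
        rcases x with ⟨i, b⟩
        cases b
        · simpa [lt] using h
        · simpa [lt] using h
  have hc : (bad m n p s).card ≤ ∑ i, (S1 i).card + ∑ z, (S2 z).card :=
    (Finset.card_le_card hsub).trans ((Finset.card_union_le _ _).trans
      (add_le_add Finset.card_biUnion_le Finset.card_biUnion_le))
  calc 2 ^ s * (bad m n p s).card ≤ 2 ^ s * (∑ i, (S1 i).card + ∑ z, (S2 z).card) := by gcongr
    _ = ∑ i, 2 ^ s * (S1 i).card + ∑ z, 2 ^ s * (S2 z).card := by
      rw [mul_add, Finset.mul_sum, Finset.mul_sum]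
    _ ≤ ∑ i : Fin m, (bF n p).card ^ m
        + ∑ z : (Fin m × Bool) × (Fin m × Bool), (bF n p).card ^ m :=
      add_le_add (Finset.sum_le_sum fun i _ => b1 i) (Finset.sum_le_sum fun z _ => b2 z)
    _ = _ := by simp; ring

theorem card_inter (n : ℕ) (S : Set (FreeGroup (Fin n))) (p : ℕ) :
    Nat.card {w : FreeGroup (Fin n) // w ∈ S ∧ FreeGroup.norm w ≤ p} ≤ ballCount n p := by
  have := (ball_fin n p).to_subtype
  exact Nat.card_mono (ball_fin n p) (s := {w | w ∈ S ∧ FreeGroup.norm w ≤ p}) (fun w hw => hw.2)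

theorem ratio_le_one (n : ℕ) (S : Set (FreeGroup (Fin n))) (p : ℕ) :
    (Nat.card {w : FreeGroup (Fin n) // w ∈ S ∧ FreeGroup.norm w ≤ p} : ℝ) /
      (ballCount n p : ℝ) ≤ 1 :=
  div_le_one_of_le₀ (by exact_mod_cast card_inter n S p) (by positivity)

theorem ud_le_one {n : ℕ} (S : Set (FreeGroup (Fin n))) : upperDensity S ≤ 1 := by
  apply Filter.limsup_le_of_le
  · exact Filter.isCoboundedUnder_le_of_le _ (x := 0) (fun p => by positivity)
  · exact Filter.Eventually.of_forall (ratio_le_one n S)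

theorem ud_nonneg {n : ℕ} (S : Set (FreeGroup (Fin n))) : 0 ≤ upperDensity S := by
  apply Filter.le_limsup_of_frequently_le
  · exact Filter.Frequently.of_forall (fun p => by positivity)
  · exact Filter.isBoundedUnder_of ⟨1, ratio_le_one n S⟩

theorem ud_zero {m n : ℕ} (hn : 1 < n) (f : Fin m → FreeGroup (Fin n))
    (H : ∀ g : FreeGroup (Fin m), (2 * (2 * m + 1)) * norm g ≤ norm (FreeGroup.lift f g)) :
    upperDensity ((FreeGroup.lift f).range : Set (FreeGroup (Fin n))) = 0 := by
  apply Filter.Tendsto.limsup_eq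
  have hb : ∀ R : ℕ, Nat.card {w : FreeGroup (Fin n) //
      w ∈ ((FreeGroup.lift f).range : Set (FreeGroup (Fin n))) ∧ FreeGroup.norm w ≤ R}
      ≤ 2 ^ (R / 2) := by
    intro R
    set M := 2 * m + 1 with hM
    have h1 : Nat.card {w : FreeGroup (Fin n) //
      w ∈ ((FreeGroup.lift f).range : Set (FreeGroup (Fin n))) ∧ FreeGroup.norm w ≤ R}
      ≤ ((bF m (R / (2 * M))).image (FreeGroup.lift f)).card := by
      rw [← Set.ncard_coe_finset]
      apply Nat.card_mono (Finset.finite_toSet _) (s := {w : FreeGroup (Fin n) |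
        w ∈ ((FreeGroup.lift f).range : Set (FreeGroup (Fin n))) ∧ FreeGroup.norm w ≤ R})
      rintro w ⟨⟨g, rfl⟩, hg⟩
      simp only [Finset.coe_image]
      refine ⟨g, ?_, rfl⟩
      rw [Finset.mem_coe, mem_bF, Nat.le_div_iff_mul_le (by omega)]
      have := H g
      rw [mul_comm]
      exact this.trans hg
    refine h1.trans (Finset.card_image_le.trans ((upper m _).trans ?_))
    calc (2 * m + 1) ^ (R / (2 * M)) ≤ (2 ^ M) ^ (R / (2 * M)) := by
          gcongr
          exact Nat.lt_two_pow_self.le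
      _ = 2 ^ (M * (R / (2 * M))) := by rw [pow_mul]
      _ ≤ 2 ^ (R / 2) := by
          gcongr
          · norm_num
          · rw [← Nat.div_div_eq_div_mul]
            exact Nat.mul_div_le _ _
  have hlim : Filter.Tendsto (fun R : ℕ => ((1 / 2 : ℝ)) ^ (R / 2)) Filter.atTop (nhds 0) :=
    (tendsto_pow_atTop_nhds_zero_of_lt_one (by norm_num) (by norm_num)).comp
      (Nat.tendsto_div_const_atTop (by norm_num))
  refine squeeze_zero (fun R => by positivity) (fun R => ?_) hlim
  have h2 : (2 : ℝ) ^ R ≤ ballCount n R := by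
    rw [← card_bF]; exact_mod_cast two_pow_le hn R
  rw [div_le_iff₀ (lt_of_lt_of_le (by positivity) h2)]
  calc _ ≤ (2 : ℝ) ^ (R / 2) := by exact_mod_cast hb R
    _ = (1 / 2) ^ (R / 2) * 2 ^ (R / 2 + R / 2) := by
      rw [pow_add, ← mul_assoc, ← mul_pow]; norm_num
    _ ≤ (1 / 2) ^ (R / 2) * 2 ^ R := by
      gcongr
      · norm_num
      · omega
    _ ≤ _ := by gcongr

theorem sum_le {m n : ℕ} (hn : 1 < n) (p : ℕ) (hp : 4 * (2 * (2 * m + 1)) ≤ p) :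
    ∑' f : {f : Fin m → FreeGroup (Fin n) // ∀ i, FreeGroup.norm (f i) ≤ p},
      upperDensity ((FreeGroup.lift (f : Fin m → FreeGroup (Fin n))).range :
            Set (FreeGroup (Fin n))) ≤ (bad m n p (p / 4)).card := by
  classical
  let P : Finset (Fin m → FreeGroup (Fin n)) := Fintype.piFinset (fun _ => bF n p)
  have hP : ∀ f, f ∈ P ↔ ∀ i, norm (f i) ≤ p := by
    intro f; simp [P, Fintype.mem_piFinset, mem_bF]
  have e : {f : Fin m → FreeGroup (Fin n) | ∀ i, FreeGroup.norm (f i) ≤ p} = (P : Set _) := by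
    ext f; simp only [Set.mem_ofPred_eq, Finset.mem_coe, hP]
  let U : (Fin m → FreeGroup (Fin n)) → ℝ := fun f =>
    upperDensity ((FreeGroup.lift f).range : Set (FreeGroup (Fin n)))
  change ∑' f : ({f : Fin m → FreeGroup (Fin n) | ∀ i, FreeGroup.norm (f i) ≤ p} : Set _), U f ≤ _
  rw [e]
  rw [Finset.tsum_subtype' P U]
  have hsub : bad m n p (p / 4) ⊆ P := Finset.filter_subset _ _
  rw [← Finset.sum_subset hsub]
  · calc _ ≤ ∑ f ∈ bad m n p (p / 4), (1 : ℝ) := Finset.sum_le_sum fun f _ => ud_le_one _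
      _ = _ := by simp
  · intro f hf hb
    have hg : ¬ ((∃ i, norm (f i) ≤ p - p / 4) ∨
        ∃ x y : Fin m × Bool, x ≠ y ∧ Agr (p / 4) (lt f x) (lt f y)) := by
      intro h
      exact hb (Finset.mem_filter.2 ⟨hf, h⟩)
    push Not at hg
    apply ud_zero hn
    apply lift_lower f (p / 4)
    · intro i
      have := hg.1 i
      omega
    · intro x y hxy
      exact hg.2 x y hxy

end EID

/-- Let `G` be the free group on `m ≥ 1` generators and `H` the free
group of rank `n > 1`. The expected density of the image of a random homomorphism
`G → H` is `0`: the average over `φ ∈ (H_p)^m` of the upper density of `φ(G)`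
tends to `0` as `p → ∞`. -/
theorem expected_image_density_zero {m n : ℕ} (hm : 1 ≤ m) (hn : 1 < n) :
    Filter.Tendsto (fun p : ℕ =>
      (1 / (ballCount n p : ℝ) ^ m) *
        ∑' f : {f : Fin m → FreeGroup (Fin n) // ∀ i, FreeGroup.norm (f i) ≤ p},
          upperDensity ((FreeGroup.lift (f : Fin m → FreeGroup (Fin n))).range :
            Set (FreeGroup (Fin n))))
      Filter.atTop (nhds 0) := by
  have hlim : Filter.Tendsto (fun p : ℕ => ((m + (m * 2) * (m * 2) : ℕ) : ℝ) * (1 / 2 : ℝ) ^ (p / 4))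
      Filter.atTop (nhds 0) := by
    have := ((tendsto_pow_atTop_nhds_zero_of_lt_one (r := (1 / 2 : ℝ)) (by norm_num)
      (by norm_num)).comp (Nat.tendsto_div_const_atTop (n := 4) (by norm_num))).const_mul
        ((m + (m * 2) * (m * 2) : ℕ) : ℝ)
    simpa using this
  refine squeeze_zero' (Filter.Eventually.of_forall fun p => ?_) ?_ hlim
  · exact mul_nonneg (by positivity) (tsum_nonneg fun f => EID.ud_nonneg _)
  · filter_upwards [Filter.eventually_ge_atTop (4 * (2 * (2 * m + 1)))] with p hp
    have h1 := EID.sum_le (m := m) hn p hp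
    have h2 := EID.bad_card (m := m) (p := p) (s := p / 4) hn (by omega)
    have h3 : (2 : ℝ) ^ p ≤ ballCount n p := by
      rw [← EID.card_bF]; exact_mod_cast EID.two_pow_le hn p
    have h4 : (0 : ℝ) < ballCount n p := lt_of_lt_of_le (by positivity) h3
    rw [EID.card_bF] at h2
    have h5 : (2 : ℝ) ^ (p / 4) * ((EID.bad m n p (p / 4)).card : ℝ) ≤
        ((m + (m * 2) * (m * 2) : ℕ) : ℝ) * (ballCount n p : ℝ) ^ m := by exact_mod_cast h2
    rw [one_div_mul_eq_div, div_le_iff₀ (by positivity)]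
    refine h1.trans ?_
    rw [one_div, inv_pow, mul_assoc, mul_left_comm, inv_mul_eq_div, le_div_iff₀ (by positivity)]
    linarith
end

section
/- Let G be the free group on generators a_1,…,a_n, let H be a free group, and let φ, ψ : G → H be homomorphisms such that φ has remnant and |Rem_φ a_i| > |ψ(a_i)| for every generator a_i. Set l = min_i (|Rem_φ a_i| − |ψ(a_i)|) > 0. Then for all u, v ∈ H and z ∈ G, if u = φ(z)·v·ψ(z)⁻¹ then |z| ≤ (|u| + |v|)/l. In particular every pair (u,v) has bounded solution length with solution bound at most (|u| + |v|)/l. -/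
/-- Half the total cancellation in the product `x * y` of elements of a free group:
`(|x| + |y| - |x*y|) / 2`. -/
def cancelLen {β : Type} [DecidableEq β] (x y : FreeGroup β) : ℕ :=
  (FreeGroup.norm x + FreeGroup.norm y - FreeGroup.norm (x * y)) / 2

/-- `x` or `x⁻¹`, according to the sign `b` (`true` = exponent `1`, `false` = exponent `-1`). -/
def pmPow {β : Type} [DecidableEq β] (b : Bool) (x : FreeGroup β) : FreeGroup β :=
  if b then x else x⁻¹

/-- The left cancellation `L_i` of the `i`-th entry of the tuple `t`: the maximum of
`(|h_j^α| + |h_i| - |h_j^α * h_i|)/2` over pairs `(j, α)` with `(j, α) ≠ (i, -1)`. -/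
def leftCancel {β : Type} [DecidableEq β] {N : ℕ} (t : Fin N → FreeGroup β) (i : Fin N) : ℕ :=
  Finset.univ.sup fun p : Fin N × Bool =>
    if p.1 = i ∧ p.2 = false then 0 else cancelLen (pmPow p.2 (t p.1)) (t i)

/-- The right cancellation `R_i` of the `i`-th entry of the tuple `t`: the maximum of
`(|h_i| + |h_k^β| - |h_i * h_k^β|)/2` over pairs `(k, β)` with `(k, β) ≠ (i, -1)`. -/
def rightCancel {β : Type} [DecidableEq β] {N : ℕ} (t : Fin N → FreeGroup β) (i : Fin N) : ℕ :=
  Finset.univ.sup fun p : Fin N × Bool =>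
    if p.1 = i ∧ p.2 = false then 0 else cancelLen (t i) (pmPow p.2 (t p.1))

/-- The remnant length `|Rem_t h_i| = |h_i| - L_i - R_i` of the `i`-th entry of `t`. -/
def remLen {β : Type} [DecidableEq β] {N : ℕ} (t : Fin N → FreeGroup β) (i : Fin N) : ℕ :=
  FreeGroup.norm (t i) - leftCancel t i - rightCancel t i

/-- A tuple has remnant if `|h_i| - L_i - R_i ≥ 1` for all `i`. -/
def HasRemnant {β : Type} [DecidableEq β] {N : ℕ} (t : Fin N → FreeGroup β) : Prop :=
  ∀ i, 1 ≤ remLen t i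

/-- length of the longest common prefix -/
def lcpLen {α : Type} [DecidableEq α] : List α → List α → ℕ
  | x :: X, y :: Y => if x = y then lcpLen X Y + 1 else 0
  | _, _ => 0

theorem lcpLen_hyp {α : Type} [DecidableEq α] : ∀ A B C : List α,
    min (lcpLen A B) (lcpLen B C) ≤ lcpLen A C
  | [], B, C => by simp [lcpLen]
  | a :: A, [], C => by simp [lcpLen]
  | a :: A, b :: B, [] => by simp [lcpLen]
  | a :: A, b :: B, c :: C => by
    have := lcpLen_hyp A B C
    simp only [lcpLen]
    split_ifs <;> first | omega | simp_all

theorem isReduced_tail {β : Type} {x : β × Bool} {X : List (β × Bool)}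
    (h : FreeGroup.IsReduced (x :: X)) : FreeGroup.IsReduced X :=
  h.infix ⟨[x], [], by simp⟩

theorem isReduced_invRev' {β : Type} [DecidableEq β] {X : List (β × Bool)}
    (h : FreeGroup.IsReduced X) : FreeGroup.IsReduced (FreeGroup.invRev X) := by
  apply FreeGroup.IsReduced.of_reduce_eq
  rw [FreeGroup.reduce_invRev, h.reduce_eq]

theorem norm_mk_reduced {β : Type} [DecidableEq β] {X : List (β × Bool)}
    (h : FreeGroup.IsReduced X) : FreeGroup.norm (FreeGroup.mk X) = X.length := by
  rw [FreeGroup.norm, FreeGroup.toWord_mk, h.reduce_eq]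

theorem norm_inv_mul_lcp {β : Type} [DecidableEq β] : ∀ X Y : List (β × Bool),
    FreeGroup.IsReduced X → FreeGroup.IsReduced Y →
    FreeGroup.norm ((FreeGroup.mk X)⁻¹ * FreeGroup.mk Y) + 2 * lcpLen X Y = X.length + Y.length
  | [], Y, _, hY => by
    have : (FreeGroup.mk ([] : List (β × Bool))) = 1 := rfl
    simp [this, lcpLen, norm_mk_reduced hY]
  | x :: X, [], hX, _ => by
    have : (FreeGroup.mk ([] : List (β × Bool))) = 1 := rfl
    rw [this, mul_one, FreeGroup.norm_inv_eq, norm_mk_reduced hX]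
    simp [lcpLen]
  | x :: X, y :: Y, hX, hY => by
    by_cases hxy : x = y
    · subst hxy
      have ih := norm_inv_mul_lcp X Y (isReduced_tail hX) (isReduced_tail hY)
      have e : ∀ Z, FreeGroup.mk (x :: Z) = FreeGroup.mk [x] * FreeGroup.mk Z := by
        intro Z; simp
      have : (FreeGroup.mk (x :: X))⁻¹ * FreeGroup.mk (x :: Y)
          = (FreeGroup.mk X)⁻¹ * FreeGroup.mk Y := by
        rw [e X, e Y]; group
      rw [this]
      simp only [lcpLen, if_true, List.length_cons]
      omega
    · have hr : FreeGroup.IsReduced (FreeGroup.invRev (x :: X) ++ (y :: Y)) := by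
        have h1 := isReduced_invRev' hX
        rw [FreeGroup.invRev_cons] at h1 ⊢
        refine FreeGroup.IsReduced.append_overlap h1 ?_ (by simp [FreeGroup.invRev])
        simp only [FreeGroup.invRev, List.map_cons, List.map_nil, List.reverse_cons,
          List.reverse_nil, List.nil_append, List.cons_append]
        rw [FreeGroup.isReduced_cons_cons]
        refine ⟨?_, hY⟩
        obtain ⟨x1, x2⟩ := x
        obtain ⟨y1, y2⟩ := y
        cases x2 <;> cases y2 <;> simp_all
      rw [FreeGroup.inv_mk, FreeGroup.mul_mk, norm_mk_reduced hr]
      simp [lcpLen, hxy]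

theorem norm_lcp {β : Type} [DecidableEq β] (x y : FreeGroup β) :
    FreeGroup.norm (x⁻¹ * y) + 2 * lcpLen x.toWord y.toWord
      = FreeGroup.norm x + FreeGroup.norm y := by
  have := norm_inv_mul_lcp x.toWord y.toWord FreeGroup.isReduced_toWord FreeGroup.isReduced_toWord
  simpa [FreeGroup.mk_toWord, FreeGroup.norm] using this

theorem cancelLen_lcp {β : Type} [DecidableEq β] (x y : FreeGroup β) :
    cancelLen x⁻¹ y = lcpLen x.toWord y.toWord := by
  have := norm_lcp x y
  unfold cancelLen
  rw [FreeGroup.norm_inv_eq]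
  omega

theorem norm_cancelLen {β : Type} [DecidableEq β] (x y : FreeGroup β) :
    FreeGroup.norm (x * y) + 2 * cancelLen x y = FreeGroup.norm x + FreeGroup.norm y := by
  have h := norm_lcp x⁻¹ y
  rw [← cancelLen_lcp, inv_inv, FreeGroup.norm_inv_eq] at h
  exact h

theorem cancelLen_hyp {β : Type} [DecidableEq β] (a b c : FreeGroup β) :
    min (cancelLen a⁻¹ b) (cancelLen b⁻¹ c) ≤ cancelLen a⁻¹ c := by
  simp only [cancelLen_lcp]
  exact lcpLen_hyp _ _ _

theorem cancelLen_symm {β : Type} [DecidableEq β] (x y : FreeGroup β) :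
    cancelLen y⁻¹ x⁻¹ = cancelLen x y := by
  unfold cancelLen
  rw [← mul_inv_rev, FreeGroup.norm_inv_eq, FreeGroup.norm_inv_eq, FreeGroup.norm_inv_eq,
    add_comm]

/-- cancellation on the left of the letter `s` -/
def lc {β : Type} [DecidableEq β] {N : ℕ} (t : Fin N → FreeGroup β) (s : Fin N × Bool) : ℕ :=
  if s.2 then leftCancel t s.1 else rightCancel t s.1

theorem pm_not {β : Type} [DecidableEq β] (b : Bool) (x : FreeGroup β) :
    pmPow (!b) x = (pmPow b x)⁻¹ := by
  cases b <;> simp [pmPow]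

theorem cancel_le_lc {β : Type} [DecidableEq β] {N : ℕ} (t : Fin N → FreeGroup β)
    (s r : Fin N × Bool) (h : s.1 = r.1 → s.2 = r.2) :
    cancelLen (pmPow s.2 (t s.1)) (pmPow r.2 (t r.1)) ≤ lc t r := by
  obtain ⟨i, b⟩ := r
  cases b
  · have := Finset.le_sup (f := fun p : Fin N × Bool =>
      if p.1 = i ∧ p.2 = false then 0 else cancelLen (t i) (pmPow p.2 (t p.1)))
      (Finset.mem_univ (s.1, !s.2))
    have h2 : ¬ (s.1 = i ∧ (!s.2) = false) := by
      rintro ⟨h1, h2⟩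
      have := h h1
      simp_all
    simp only [if_neg h2, pm_not] at this
    rw [← cancelLen_symm]
    have e : (pmPow false (t i))⁻¹ = t i := by simp [pmPow]
    simp only [e]
    exact this
  · have := Finset.le_sup (f := fun p : Fin N × Bool =>
      if p.1 = i ∧ p.2 = false then 0 else cancelLen (pmPow p.2 (t p.1)) (t i))
      (Finset.mem_univ s)
    have h2 : ¬ (s.1 = i ∧ s.2 = false) := by
      rintro ⟨h1, h2⟩
      have := h h1
      simp_all
    simp only [if_neg h2] at this
    exact this

theorem cancel_le_rc {β : Type} [DecidableEq β] {N : ℕ} (t : Fin N → FreeGroup β)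
    (s r : Fin N × Bool) (h : s.1 = r.1 → s.2 = r.2) :
    cancelLen (pmPow s.2 (t s.1)) (pmPow r.2 (t r.1)) ≤ lc t (s.1, !s.2) := by
  have := cancel_le_lc t (r.1, !r.2) (s.1, !s.2) (by intro e; simp [h e.symm])
  simp only [pm_not] at this
  rwa [cancelLen_symm] at this

theorem norm_letter {β : Type} [DecidableEq β] {N : ℕ} (t : Fin N → FreeGroup β)
    (ht : HasRemnant t) (s : Fin N × Bool) :
    FreeGroup.norm (pmPow s.2 (t s.1)) = lc t s + lc t (s.1, !s.2) + remLen t s.1 := by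
  have := ht s.1
  obtain ⟨i, b⟩ := s
  unfold remLen at *
  cases b <;> simp [lc, pmPow] at * <;> omega

theorem map_cons {n : ℕ} {β : Type} [DecidableEq β] (φ : FreeGroup (Fin n) →* FreeGroup β)
    (s : Fin n × Bool) (w : List (Fin n × Bool)) :
    φ (FreeGroup.mk (s :: w)) = pmPow s.2 (φ (FreeGroup.of s.1)) * φ (FreeGroup.mk w) := by
  have : FreeGroup.mk (s :: w) = pmPow s.2 (FreeGroup.of s.1) * FreeGroup.mk w := by
    obtain ⟨i, b⟩ := s
    cases b <;> simp [pmPow, FreeGroup.of, FreeGroup.invRev]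
  rw [this, map_mul]
  congr 1
  cases s.2 <;> simp [pmPow]

theorem main_ind {n : ℕ} {β : Type} [DecidableEq β] (φ : FreeGroup (Fin n) →* FreeGroup β)
    (t : Fin n → FreeGroup β) (htt : t = fun i => φ (FreeGroup.of i))
    (ht : HasRemnant t) : ∀ (w : List (Fin n × Bool)) (s : Fin n × Bool),
    FreeGroup.IsReduced (s :: w) →
    lc t s + ((s :: w).map fun p => remLen t p.1).sum ≤ FreeGroup.norm (φ (FreeGroup.mk (s :: w)))
    ∧ cancelLen (pmPow s.2 (t s.1)) (φ (FreeGroup.mk w)) ≤ lc t (s.1, !s.2)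
  | [], s, _ => by
    have h := norm_letter t ht s
    have e : φ (FreeGroup.mk []) = 1 := φ.map_one
    have e2 := map_cons φ s []
    rw [e, mul_one] at e2
    rw [e2, e]
    have e3 : φ (FreeGroup.of s.1) = t s.1 := by rw [htt]
    rw [e3]
    refine ⟨?_, ?_⟩
    · simp only [List.map_cons, List.map_nil, List.sum_cons, List.sum_nil]; omega
    · have := norm_cancelLen (pmPow s.2 (t s.1)) 1
      simp at this
      omega
  | r :: w, s, hs => by
    obtain ⟨hsr, hr⟩ := FreeGroup.isReduced_cons_cons.1 hs
    obtain ⟨ih1, ih2⟩ := main_ind φ t htt ht w r hr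
    have e3 : ∀ i, φ (FreeGroup.of i) = t i := by intro i; rw [htt]
    have er := map_cons φ r w
    have es := map_cons φ s (r :: w)
    rw [e3] at er es
    rw [es]
    have nr := norm_letter t ht r
    have ns := norm_letter t ht s
    have hl := cancel_le_lc t s r hsr
    have hrr := cancel_le_rc t s r hsr
    have hrem := ht r.1
    generalize pmPow s.2 (t s.1) = gs at *
    generalize pmPow r.2 (t r.1) = gr at *
    have c1 := norm_cancelLen gr (φ (FreeGroup.mk w))
    rw [← er] at c1
    have c2 := norm_cancelLen gs (φ (FreeGroup.mk (r :: w)))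
    have c3 := norm_cancelLen (φ (FreeGroup.mk (r :: w)))⁻¹ gr
    have e4 : FreeGroup.norm ((φ (FreeGroup.mk (r :: w)))⁻¹ * gr)
        = FreeGroup.norm (φ (FreeGroup.mk w)) := by
      rw [er, ← FreeGroup.norm_inv_eq (x := φ (FreeGroup.mk w))]
      congr 1
      group
    rw [e4, FreeGroup.norm_inv_eq] at c3
    have hyp := cancelLen_hyp gs⁻¹ (φ (FreeGroup.mk (r :: w))) gr
    rw [inv_inv] at hyp
    simp only [List.map_cons, List.sum_cons] at ih1 ⊢
    have key : cancelLen gs (φ (FreeGroup.mk (r :: w))) ≤ cancelLen gs gr := by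
      rcases min_le_iff.1 hyp with h | h
      · exact h
      · omega
    omega

theorem norm_psi_le {n : ℕ} {β : Type} [DecidableEq β] (ψ : FreeGroup (Fin n) →* FreeGroup β) :
    ∀ w : List (Fin n × Bool), FreeGroup.norm (ψ (FreeGroup.mk w)) ≤
      (w.map fun p => FreeGroup.norm (ψ (FreeGroup.of p.1))).sum
  | [] => by
    have e : ψ (FreeGroup.mk []) = 1 := ψ.map_one
    simp [e]
  | s :: w => by
    have ih := norm_psi_le ψ w
    rw [map_cons]
    have h := FreeGroup.norm_mul_le (pmPow s.2 (ψ (FreeGroup.of s.1))) (ψ (FreeGroup.mk w))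
    have : FreeGroup.norm (pmPow s.2 (ψ (FreeGroup.of s.1)))
        = FreeGroup.norm (ψ (FreeGroup.of s.1)) := by
      cases s.2 <;> simp [pmPow]
    simp only [List.map_cons, List.sum_cons]
    omega

theorem sum_bound {α : Type} (f g : α → ℕ) (l : ℕ) (h : ∀ a, g a + l ≤ f a) :
    ∀ w : List α, (w.map g).sum + l * w.length ≤ (w.map f).sum
  | [] => by simp
  | s :: w => by
    have ih := sum_bound f g l h w
    have := h s
    simp only [List.map_cons, List.sum_cons, List.length_cons, Nat.mul_add]
    omega

/-- If `φ ψ : G → H` are homomorphisms of free groups with `φ` having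
remnant and `|Rem_φ a_i| > |ψ(a_i)|` for every generator, then with
`l = min_i (|Rem_φ a_i| - |ψ(a_i)|)`, any solution `z` of `u = φ(z) * v * ψ(z)⁻¹`
satisfies `|z| ≤ (|u| + |v|) / l`: every pair `(u, v)` has bounded solution length. -/
theorem bounded_solution_length {n : ℕ} {β : Type} [DecidableEq β] (hn : 0 < n)
    (φ ψ : FreeGroup (Fin n) →* FreeGroup β)
    (hrem : HasRemnant fun i : Fin n => φ (FreeGroup.of i))
    (hlt : ∀ i : Fin n, FreeGroup.norm (ψ (FreeGroup.of i)) <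
      remLen (fun j : Fin n => φ (FreeGroup.of j)) i)
    (l : ℕ)
    (hl : l = Finset.univ.inf'
      (⟨⟨0, hn⟩, Finset.mem_univ _⟩ : (Finset.univ : Finset (Fin n)).Nonempty)
      (fun i => remLen (fun j : Fin n => φ (FreeGroup.of j)) i -
        FreeGroup.norm (ψ (FreeGroup.of i))))
    (u v : FreeGroup β) (z : FreeGroup (Fin n))
    (hz : u = φ z * v * (ψ z)⁻¹) :
    (FreeGroup.norm z : ℝ) ≤ (FreeGroup.norm u + FreeGroup.norm v) / l := by
  have hle : ∀ i : Fin n, FreeGroup.norm (ψ (FreeGroup.of i)) + l ≤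
      remLen (fun j : Fin n => φ (FreeGroup.of j)) i := by
    intro i
    have h1 := Finset.inf'_le (s := (Finset.univ : Finset (Fin n)))
      (fun i => remLen (fun j : Fin n => φ (FreeGroup.of j)) i -
        FreeGroup.norm (ψ (FreeGroup.of i))) (Finset.mem_univ i)
    rw [← hl] at h1
    have h2 := hlt i
    omega
  have hpos : 0 < l := by
    rw [hl]
    refine (Finset.lt_inf'_iff _).2 ?_
    intro i _
    have := hlt i
    omega
  have hphi : (z.toWord.map fun p => remLen (fun j : Fin n => φ (FreeGroup.of j)) p.1).sum
      ≤ FreeGroup.norm (φ z) := by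
    have hred : FreeGroup.IsReduced z.toWord := FreeGroup.isReduced_toWord
    have hmk : FreeGroup.mk z.toWord = z := FreeGroup.mk_toWord
    rcases hw : z.toWord with _ | ⟨s, w⟩
    · simp
    · rw [hw] at hred hmk
      have := (main_ind φ _ rfl hrem w s hred).1
      rw [hmk] at this
      omega
  have hpsi := norm_psi_le ψ z.toWord
  rw [FreeGroup.mk_toWord] at hpsi
  have hs := sum_bound (fun p : Fin n × Bool => remLen (fun j : Fin n => φ (FreeGroup.of j)) p.1)
    (fun p => FreeGroup.norm (ψ (FreeGroup.of p.1))) l (fun p => hle p.1) z.toWord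
  have hφz : φ z = u * ψ z * v⁻¹ := by rw [hz]; group
  have h1 := FreeGroup.norm_mul_le (u * ψ z) v⁻¹
  have h2 := FreeGroup.norm_mul_le u (ψ z)
  rw [← hφz, FreeGroup.norm_inv_eq] at h1
  have hfin : l * FreeGroup.norm z ≤ FreeGroup.norm u + FreeGroup.norm v := by
    change l * z.toWord.length ≤ _
    omega
  rw [le_div_iff₀ (by exact_mod_cast hpos), mul_comm]
  exact_mod_cast hfin
end

section
/- Let G be the free group on generators a_1,…,a_n and let H be a free group of rank greater than 1. Then for every natural number l ≥ 1, the set of homomorphisms φ : G → H with remnant length at least l, identified with n-tuples in H^n, is generic: its asymptotic density in H^n equals 1. -/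
namespace RemAux

open FreeGroup

theorem split_red {β : Type} [DecidableEq β] : ∀ (X Y : List (β × Bool)), IsReduced X → IsReduced Y →
    ∃ A C B, X = A ++ C ∧ Y = invRev C ++ B ∧ IsReduced (A ++ B) := by
  intro X
  induction X using List.reverseRecOn with
  | nil => intro Y _ hY; exact ⟨[], [], Y, rfl, rfl, hY⟩
  | append_singleton X s ih =>
    intro Y hX hY
    cases Y with
    | nil => exact ⟨X ++ [s], [], [], by simp, by simp, by simpa using hX⟩
    | cons t Y =>
      by_cases h : t = (s.1, !s.2)
      · obtain ⟨A, C, B, h1, h2, h3⟩ := ih Y (hX.infix ⟨[], [s], by simp⟩) (hY.infix ⟨[t], [], by simp⟩)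
        refine ⟨A, C ++ [s], B, by simp [h1], ?_, h3⟩
        rw [h2, h]
        simp [invRev]
      · refine ⟨X ++ [s], [], t :: Y, by simp, by simp, ?_⟩
        have : IsReduced ([s] ++ t :: Y) := by
          simp only [List.singleton_append, isReduced_cons_cons]
          refine ⟨?_, hY⟩
          intro h1
          by_contra h2
          apply h
          ext
          · exact h1.symm
          · cases hs : s.2 <;> cases ht : t.2 <;> simp_all
        exact hX.append_overlap this (by simp)

/-- the last `k` letters. -/
def suf {β : Type} [DecidableEq β] (k : ℕ) (x : FreeGroup β) : FreeGroup β :=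
  mk (x.toWord.drop (x.toWord.length - k))

theorem norm_mk_red {β : Type} [DecidableEq β] {L : List (β × Bool)} (h : IsReduced L) :
    FreeGroup.norm (mk L) = L.length := by
  rw [FreeGroup.norm, toWord_mk, h.reduce_eq]

theorem cancel_split {β : Type} [DecidableEq β] {k : ℕ} {x y : FreeGroup β} (h : k ≤ cancelLen x y) :
    ∃ U D V, x.toWord = U ++ D ∧ y.toWord = invRev D ++ V ∧ D.length = k := by
  obtain ⟨A, C, B, h1, h2, h3⟩ := split_red x.toWord y.toWord isReduced_toWord isReduced_toWord
  have hxy : x * y = mk (A ++ B) := by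
    rw [← mk_toWord (x := x), ← mk_toWord (x := y), h1, h2, ← mul_mk, ← mul_mk, ← mul_mk, ← inv_mk]
    group
  have hn : FreeGroup.norm (x * y) = A.length + B.length := by
    rw [hxy, norm_mk_red h3, List.length_append]
  have hx : FreeGroup.norm x = A.length + C.length := by rw [FreeGroup.norm, h1, List.length_append]
  have hy : FreeGroup.norm y = C.length + B.length := by
    rw [FreeGroup.norm, h2, List.length_append, invRev_length]
  have hk : k ≤ C.length := by
    unfold cancelLen at h; omega
  refine ⟨A ++ C.take (C.length - k), C.drop (C.length - k), invRev (C.take (C.length - k)) ++ B, ?_, ?_, ?_⟩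
  · rw [List.append_assoc, List.take_append_drop, h1]
  · rw [← List.append_assoc, ← invRev_append, List.take_append_drop, h2]
  · rw [List.length_drop]; omega

theorem suf_eq {β : Type} [DecidableEq β] {k : ℕ} {x : FreeGroup β} {U D : List (β × Bool)}
    (h : x.toWord = U ++ D) (hD : D.length = k) : suf k x = mk D := by
  unfold suf
  rw [h, List.length_append, hD]
  simp

theorem cancel_left {β : Type} [DecidableEq β] {k : ℕ} {x y : FreeGroup β} (h : k ≤ cancelLen x y) :
    FreeGroup.norm (suf k x * y) ≤ FreeGroup.norm y - k := by
  obtain ⟨U, D, V, h1, h2, h3⟩ := cancel_split h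
  rw [suf_eq h1 h3]
  have : mk D * y = mk V := by
    rw [← mk_toWord (x := y), h2, ← mul_mk, ← inv_mk]; group
  rw [this]
  refine norm_mk_le.trans ?_
  rw [FreeGroup.norm, h2, List.length_append, invRev_length]; omega

theorem cancel_self {β : Type} [DecidableEq β] {k : ℕ} {x : FreeGroup β} (h : k ≤ cancelLen x x)
    (hx : 2 * k ≤ FreeGroup.norm x) :
    ∃ c w, FreeGroup.norm c = k ∧ FreeGroup.norm w ≤ FreeGroup.norm x - 2 * k ∧ x = c⁻¹ * w * c := by
  obtain ⟨U, D, V, h1, h2, h3⟩ := cancel_split h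
  have hl : FreeGroup.norm x = k + V.length := by
    rw [FreeGroup.norm, h2, List.length_append, invRev_length, h3]
  have : D <:+ V := by
    refine List.suffix_of_suffix_length_le (l₃ := x.toWord) ⟨U, h1.symm⟩ ⟨_, h2.symm⟩ ?_
    omega
  obtain ⟨W, rfl⟩ := this
  rw [List.length_append] at hl
  refine ⟨mk D, mk W, ?_, norm_mk_le.trans (by omega), ?_⟩
  · rw [norm_mk_red, h3]
    have := isReduced_toWord (x := x)
    rw [h1] at this
    exact this.infix ⟨U, [], by simp⟩
  · conv_lhs => rw [← mk_toWord (x := x), h2]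
    rw [← mul_mk, ← mul_mk, inv_mk, mul_assoc]

theorem sep_exists {n : ℕ} (hn : 1 < n) (c w : FreeGroup (Fin n)) :
    ∃ s, IsReduced (c.toWord ++ s :: w.toWord) := by
  have key : ∀ a b : Fin n × Bool, ∃ s, s ≠ a ∧ s ≠ b := by
    intro a b
    obtain ⟨s, -, hs⟩ := Finset.exists_mem_notMem_of_card_lt_card
      (s := ({a, b} : Finset (Fin n × Bool))) (t := Finset.univ) (by
        refine lt_of_le_of_lt Finset.card_le_two ?_
        simp; omega)
    exact ⟨s, by simpa using hs⟩
  let d : Fin n × Bool := (⟨0, by omega⟩, true)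
  let a := (c.toWord.getLast?).getD d
  let b := (w.toWord.head?).getD d
  obtain ⟨s, h1, h2⟩ := key (a.1, !a.2) (b.1, !b.2)
  have ne : ∀ u v : Fin n × Bool, u ≠ (v.1, !v.2) → u.1 = v.1 → u.2 = v.2 := by
    intro u v h e
    by_contra h'
    apply h
    ext
    · rw [e]
    · cases hs : u.2 <;> cases ht : v.2 <;> simp_all
  refine ⟨s, ?_⟩
  have hc := isReduced_toWord (x := c)
  have hw := isReduced_toWord (x := w)
  unfold FreeGroup.IsReduced at *
  rw [List.isChain_append, List.isChain_cons]
  refine ⟨hc, ⟨?_, hw⟩, ?_⟩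
  · intro y hy
    have : b = y := by simp only [b]; rw [hy]; rfl
    exact ne s y (this ▸ h2)
  · intro x hx y hy e
    have : a = x := by simp only [a]; rw [hx]; rfl
    simp at hy; subst hy
    exact (ne s x (this ▸ h1) e.symm).symm

theorem ball_finite (n p : ℕ) : {w : FreeGroup (Fin n) | FreeGroup.norm w ≤ p}.Finite :=
  Set.Finite.of_injOn (f := toWord) (t := {l : List (Fin n × Bool) | l.length ≤ p})
    (fun _ hw => hw) toWord_injective.injOn (List.finite_length_le _ _)

/-- The ball as a finset. -/
noncomputable def ball (n p : ℕ) : Finset (FreeGroup (Fin n)) := (ball_finite n p).toFinset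

theorem mem_ball {n p : ℕ} {w : FreeGroup (Fin n)} : w ∈ ball n p ↔ FreeGroup.norm w ≤ p := by
  simp [ball]

theorem ball_card (n p : ℕ) : ballCount n p = (ball n p).card := by
  unfold ballCount
  rw [Nat.subtype_card (ball n p) (fun x => mem_ball)]

theorem ball_mono {n p q : ℕ} (h : p ≤ q) : (ball n p).card ≤ (ball n q).card := by
  apply Finset.card_le_card
  intro x hx
  rw [mem_ball] at *
  omega

/-- The sphere as a finset. -/
noncomputable def sph (n p : ℕ) : Finset (FreeGroup (Fin n)) :=
  (ball n p).filter fun w => FreeGroup.norm w = p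

theorem mem_sph {n p : ℕ} {w : FreeGroup (Fin n)} : w ∈ sph n p ↔ FreeGroup.norm w = p := by
  simp only [sph, Finset.mem_filter, mem_ball]; omega

theorem sph_mul_ball {n : ℕ} (hn : 1 < n) (k r : ℕ) :
    (sph n k).card * (ball n r).card ≤ (ball n (k + r + 1)).card := by
  choose s hs using sep_exists hn
  rw [← Finset.card_product]
  refine Finset.card_le_card_of_injOn
    (fun q => mk (q.1.toWord ++ s q.1 q.2 :: q.2.toWord)) ?_ ?_
  · rintro ⟨c, w⟩ h
    simp only [Finset.coe_product, Set.mem_prod, Finset.mem_coe, mem_sph, mem_ball] at h ⊢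
    refine norm_mk_le.trans ?_
    have h1 := h.1
    have h2 := h.2
    unfold FreeGroup.norm at h1 h2
    simp only [List.length_append, List.length_cons]; omega
  · rintro ⟨c, w⟩ h ⟨c', w'⟩ h' e
    simp only [Finset.coe_product, Set.mem_prod, Finset.mem_coe, mem_sph, mem_ball] at h h' e
    have e' := congrArg toWord e
    rw [toWord_mk, toWord_mk, (hs c w).reduce_eq, (hs c' w').reduce_eq] at e'
    have h1 : c.toWord.length = c'.toWord.length := h.1.trans h'.1.symm
    obtain ⟨e1, e2⟩ := List.append_inj e' h1
    have e3 := (List.cons.inj e2).2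
    rw [toWord_inj] at e1 e3
    rw [e1, e3]

theorem ball_growth {n : ℕ} (hn : 1 < n) (r : ℕ) : 2 * (ball n r).card ≤ (ball n (r + 2)).card := by
  have h := sph_mul_ball hn 1 r
  have h2 : 2 ≤ (sph n 1).card := by
    have : ({FreeGroup.of ⟨0, by omega⟩, FreeGroup.of ⟨1, hn⟩} : Finset (FreeGroup (Fin n))) ⊆ sph n 1 := by
      intro x hx
      rw [mem_sph]
      simp only [Finset.mem_insert, Finset.mem_singleton] at hx
      rcases hx with rfl | rfl <;> exact norm_of _
    refine le_trans (le_of_eq ?_) (Finset.card_le_card this)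
    rw [Finset.card_pair]
    intro e
    have := FreeGroup.of_injective e
    simp at this
  calc _ ≤ _ := Nat.mul_le_mul_right _ h2
    _ ≤ _ := h
    _ = _ := by congr 2; omega

theorem ball_growth_pow {n : ℕ} (hn : 1 < n) (r j : ℕ) :
    2 ^ j * (ball n r).card ≤ (ball n (r + 2 * j)).card := by
  induction j with
  | zero => simp
  | succ j ih =>
    have := ball_growth hn (r + 2 * j)
    rw [show r + 2 * (j + 1) = r + 2 * j + 2 by ring, pow_succ]
    nlinarith

theorem pmPow_inj {n : ℕ} (b : Bool) : Function.Injective (pmPow b : FreeGroup (Fin n) → _) := by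
  intro x y h
  cases b <;> simpa [pmPow] using h

theorem norm_pmPow {n : ℕ} (b : Bool) (x : FreeGroup (Fin n)) :
    FreeGroup.norm (pmPow b x) = FreeGroup.norm x := by
  cases b <;> simp [pmPow]

open Classical in
theorem count_pair {n : ℕ} (k p : ℕ) (b : Bool) (x : FreeGroup (Fin n)) :
    ((ball n p).filter fun y => k ≤ cancelLen x (pmPow b y)).card ≤ (ball n (p - k)).card := by
  refine Finset.card_le_card_of_injOn (fun y => suf k x * pmPow b y) ?_ ?_
  · intro y hy
    simp only [Finset.coe_filter, Set.mem_ofPred_eq, mem_ball, Finset.mem_coe] at hy ⊢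
    have := cancel_left hy.2
    rw [norm_pmPow] at this
    omega
  · intro y _ z _ h
    exact pmPow_inj b (mul_left_cancel h)

open Classical in
theorem count_self {n : ℕ} (k p : ℕ) :
    ((ball n p).filter fun y => 2 * k ≤ FreeGroup.norm y ∧ k ≤ cancelLen y y).card
      ≤ (sph n k).card * (ball n (p - 2 * k)).card := by
  rw [← Finset.card_product]
  refine le_trans (Finset.card_le_card ?_)
    (Finset.card_image_le (f := fun q : FreeGroup (Fin n) × FreeGroup (Fin n) => q.1⁻¹ * q.2 * q.1))
  intro y hy
  simp only [Finset.mem_filter, mem_ball] at hy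
  obtain ⟨c, w, h1, h2, h3⟩ := cancel_self hy.2.2 hy.2.1
  simp only [Finset.mem_image, Finset.mem_product, mem_sph, mem_ball]
  exact ⟨(c, w), ⟨h1, by simp only; omega⟩, h3.symm⟩

open Classical in
theorem count_fiber {m : ℕ} {G : Type} (B : Finset G) (i : Fin m) (Bad : (Fin m → G) → Prop) (M : ℕ)
    (h : ∀ f : Fin m → G, (B.filter fun y => Bad (Function.update f i y)).card ≤ M) :
    B.card * ((Fintype.piFinset fun _ : Fin m => B).filter Bad).card ≤ B.card ^ m * M := by
  have h1 : ((Fintype.piFinset fun _ : Fin m => B).sigma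
      fun f => B.filter fun y => Bad (Function.update f i y)).card ≤ B.card ^ m * M := by
    rw [Finset.card_sigma]
    refine (Finset.sum_le_card_nsmul _ _ M fun f _ => h f).trans ?_
    simp
  refine le_trans ?_ h1
  rw [← Finset.card_product]
  refine Finset.card_le_card_of_injOn
    (fun q => (⟨Function.update q.2 i q.1, q.2 i⟩ : (_ : Fin m → G) × G)) ?_ ?_
  · rintro ⟨z, g⟩ hq
    simp only [Finset.coe_product, Set.mem_prod, Finset.mem_coe, Finset.mem_filter,
      Fintype.mem_piFinset] at hq
    simp only [Finset.mem_coe, Finset.mem_sigma, Finset.mem_filter, Fintype.mem_piFinset,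
      Function.update_idem, Function.update_eq_self]
    refine ⟨?_, hq.2.1 i, hq.2.2⟩
    intro a
    by_cases ha : a = i
    · subst ha; simpa using hq.1
    · simpa [ha] using hq.2.1 a
  · rintro ⟨z, g⟩ _ ⟨z', g'⟩ _ e
    simp only [Sigma.mk.injEq, heq_eq_eq] at e
    obtain ⟨e1, e2⟩ := e
    have hz := congrFun e1 i
    simp only [Function.update_self] at hz
    subst hz
    have : g = g' := by
      funext a
      by_cases ha : a = i
      · rw [ha, e2]
      · simpa [ha] using congrFun e1 a
    rw [this]

/-- Bad event. -/
def Bd {m n : ℕ} (k l : ℕ) (q : Fin m × Fin m × Bool × Bool) (f : Fin m → FreeGroup (Fin n)) : Prop :=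
  FreeGroup.norm (f q.1) < 2 * k + l ∨
    (q.1 = q.2.1 ∧ 2 * k ≤ FreeGroup.norm (f q.1) ∧ k ≤ cancelLen (f q.1) (f q.1)) ∨
    (q.1 ≠ q.2.1 ∧ k ≤ cancelLen (pmPow q.2.2.1 (f q.2.1)) (pmPow q.2.2.2 (f q.1)))

open Classical in
theorem count_Bd {m n : ℕ} (hn : 1 < n) {k l p : ℕ} (h1 : 2 * k + l ≤ p - k + 1) (h2 : 2 * k ≤ p)
    (q : Fin m × Fin m × Bool × Bool) :
    (ball n p).card * ((Fintype.piFinset fun _ : Fin m => ball n p).filter (Bd k l q)).card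
      ≤ (ball n p).card ^ m * (2 * (ball n (p - k + 1)).card) := by
  obtain ⟨i, j, a, b⟩ := q
  apply count_fiber (ball n p) i
  intro f
  have hA : ((ball n p).filter fun y => FreeGroup.norm y < 2 * k + l).card
      ≤ (ball n (p - k + 1)).card := by
    apply Finset.card_le_card
    intro y hy
    simp only [Finset.mem_filter, mem_ball] at hy ⊢
    omega
  by_cases hij : i = j
  · subst hij
    have hB := (count_self k p).trans (sph_mul_ball hn k (p - 2 * k))
    rw [show k + (p - 2 * k) + 1 = p - k + 1 by omega] at hB
    refine le_trans (Finset.card_le_card ?_) ((Finset.card_union_le _ _).trans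
      ((add_le_add hA hB).trans (by omega)))
    intro y hy
    simp only [Finset.mem_filter, Bd, Function.update_self, Finset.mem_union] at hy ⊢
    tauto
  · have hB := (count_pair k p b (pmPow a (f j))).trans
      (ball_mono (n := n) (show p - k ≤ p - k + 1 by omega))
    refine le_trans (Finset.card_le_card ?_) ((Finset.card_union_le _ _).trans
      ((add_le_add hA hB).trans (by omega)))
    intro y hy
    have hji : j ≠ i := fun h => hij h.symm
    simp only [Finset.mem_filter, Bd, Function.update_self, Finset.mem_union,
      Function.update_of_ne hji] at hy ⊢
    tauto

theorem good_of_not_Bd {m n : ℕ} {k l : ℕ} {f : Fin m → FreeGroup (Fin n)}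
    (h : ∀ q, ¬ Bd k l q f) (i : Fin m) : l ≤ remLen f i := by
  have hlen : 2 * k + l ≤ FreeGroup.norm (f i) := by
    by_contra hc
    exact h (i, i, true, true) (Or.inl (by simpa using hc))
  have hself : cancelLen (f i) (f i) ≤ k := by
    by_contra hc
    exact h (i, i, true, true) (Or.inr (Or.inl ⟨rfl, by simp only; omega, by simp only; omega⟩))
  have hL : leftCancel f i ≤ k := by
    apply Finset.sup_le
    rintro ⟨j, a⟩ _
    dsimp only
    split_ifs with hc
    · omega
    · by_cases hj : i = j
      · subst hj
        cases a
        · simp at hc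
        · exact hself
      · by_contra hc'
        exact h (i, j, a, true) (Or.inr (Or.inr ⟨hj, le_of_lt (not_le.1 hc')⟩))
  have hR : rightCancel f i ≤ k := by
    apply Finset.sup_le
    rintro ⟨j, a⟩ _
    dsimp only
    split_ifs with hc
    · omega
    · by_cases hj : j = i
      · subst hj
        cases a
        · simp at hc
        · exact hself
      · by_contra hc'
        exact h (j, i, true, a) (Or.inr (Or.inr ⟨hj, le_of_lt (not_le.1 hc')⟩))
  unfold remLen
  omega

open Classical in
theorem main_count {m n : ℕ} (hn : 1 < n) {k l p : ℕ} (h1 : 2 * k + l ≤ p - k + 1) (h2 : 2 * k ≤ p) :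
    (ball n p).card * (ball n p).card ^ m ≤
      (ball n p).card * ((Fintype.piFinset fun _ : Fin m => ball n p).filter
        fun f => ∀ i, l ≤ remLen f i).card
      + 4 * m ^ 2 * ((ball n p).card ^ m * (2 * (ball n (p - k + 1)).card)) := by
  set P := Fintype.piFinset fun _ : Fin m => ball n p with hP
  have hPc : P.card = (ball n p).card ^ m := by simp [hP]
  have hsub : P ⊆ (P.filter fun f => ∀ i, l ≤ remLen f i) ∪
      Finset.univ.biUnion fun q => P.filter (Bd k l q) := by
    intro f hf
    by_cases hg : ∀ q, ¬ Bd k l q f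
    · exact Finset.mem_union_left _ (Finset.mem_filter.2 ⟨hf, good_of_not_Bd hg⟩)
    · push Not at hg
      obtain ⟨q, hq⟩ := hg
      exact Finset.mem_union_right _ (Finset.mem_biUnion.2
        ⟨q, Finset.mem_univ _, Finset.mem_filter.2 ⟨hf, hq⟩⟩)
  have hc := (Finset.card_le_card hsub).trans (Finset.card_union_le _ _)
  have hc2 := hc.trans (Nat.add_le_add_left Finset.card_biUnion_le _)
  rw [← hPc]
  refine (Nat.mul_le_mul_left _ hc2).trans ?_
  rw [mul_add, Finset.mul_sum]
  refine Nat.add_le_add_left ?_ _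
  refine (Finset.sum_le_card_nsmul _ _ _ fun q _ => count_Bd hn h1 h2 q).trans ?_
  rw [hPc]
  simp only [Finset.card_univ, Fintype.card_prod, Fintype.card_fin, Fintype.card_bool, smul_eq_mul]
  apply le_of_eq; ring

open Classical in
theorem good_card {m n : ℕ} (l p : ℕ) : Nat.card {f : Fin m → FreeGroup (Fin n) //
          (∀ i, l ≤ remLen f i) ∧ ∀ i, FreeGroup.norm (f i) ≤ p} =
      ((Fintype.piFinset fun _ : Fin m => ball n p).filter
        fun f => ∀ i, l ≤ remLen f i).card := by
  apply Nat.subtype_card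
  intro f
  simp only [Finset.mem_filter, Fintype.mem_piFinset, mem_ball]
  tauto

theorem ball_pos (n p : ℕ) : 0 < (ball n p).card :=
  Finset.card_pos.2 ⟨1, by rw [mem_ball]; simp⟩

end RemAux

/-- Let `G` be the free group on `m` generators and `H` the free group
of rank `n > 1`. For every `l ≥ 1`, the set of homomorphisms `G → H` with remnant length
at least `l` (identified with `m`-tuples in `H^m`) is generic: its asymptotic density in
`H^m` equals `1`. -/
theorem generic_remnant_length {m n l : ℕ} (hn : 1 < n) (hl : 1 ≤ l) :
    Filter.Tendsto (fun p : ℕ =>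
      (Nat.card {f : Fin m → FreeGroup (Fin n) //
          (∀ i, l ≤ remLen f i) ∧ ∀ i, FreeGroup.norm (f i) ≤ p} : ℝ) /
        (ballCount n p : ℝ) ^ m)
      Filter.atTop (nhds 1) := by
  classical
  have hj : Filter.Tendsto (fun p : ℕ => (p / 4 - 1) / 2) Filter.atTop Filter.atTop := by
    rw [Filter.tendsto_atTop]
    intro b
    filter_upwards [Filter.eventually_ge_atTop (8 * b + 8)] with p hp
    omega
  have hlim : Filter.Tendsto (fun p : ℕ => 1 - (8 * (m : ℝ) ^ 2) * (1 / 2 : ℝ) ^ ((p / 4 - 1) / 2))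
      Filter.atTop (nhds 1) := by
    have h := (tendsto_pow_atTop_nhds_zero_of_lt_one (r := (1 / 2 : ℝ)) (by norm_num)
      (by norm_num)).comp hj
    simpa using (h.const_mul (8 * (m : ℝ) ^ 2)).const_sub 1
  refine tendsto_of_tendsto_of_tendsto_of_le_of_le' hlim tendsto_const_nhds ?_ ?_
  · filter_upwards [Filter.eventually_ge_atTop (4 * l + 4)] with p hp
    rw [RemAux.ball_card]
    have hc := RemAux.main_count (m := m) hn (k := p / 4) (l := l) (p := p) (by omega) (by omega)
    rw [← RemAux.good_card] at hc
    have hg := (RemAux.ball_growth_pow hn (p - p / 4 + 1) ((p / 4 - 1) / 2)).trans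
      (RemAux.ball_mono (n := n) (show p - p / 4 + 1 + 2 * ((p / 4 - 1) / 2) ≤ p by omega))
    have hB : (0 : ℝ) < (RemAux.ball n p).card := by exact_mod_cast RemAux.ball_pos n p
    generalize (RemAux.ball n p).card = B at *
    generalize (RemAux.ball n (p - p / 4 + 1)).card = M at *
    generalize (p / 4 - 1) / 2 = j at *
    generalize Nat.card _ = g at *
    have hc' : (B : ℝ) * B ^ m ≤ B * g + 4 * m ^ 2 * (B ^ m * (2 * M)) := by exact_mod_cast hc
    have hg' : (2 : ℝ) ^ j * M ≤ B := by exact_mod_cast hg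
    have hM : (M : ℝ) ≤ B * (1 / 2) ^ j := by
      rw [one_div, inv_pow, ← div_eq_mul_inv, le_div_iff₀ (by positivity)]
      linarith
    rw [le_div_iff₀ (by positivity)]
    have h3 : (4 * (m : ℝ) ^ 2 * (B ^ m * 2)) * M ≤ (4 * (m : ℝ) ^ 2 * (B ^ m * 2)) * (B * (1 / 2) ^ j) :=
      mul_le_mul_of_nonneg_left hM (by positivity)
    refine le_of_mul_le_mul_left ?_ hB
    linarith
  · filter_upwards with p
    rw [RemAux.good_card, RemAux.ball_card]
    apply div_le_one_of_le₀ _ (by positivity)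
    have := Finset.card_filter_le (Fintype.piFinset fun _ : Fin m => RemAux.ball n p)
      (fun f => ∀ i, l ≤ remLen f i)
    rw [Fintype.card_piFinset_const] at this
    exact_mod_cast this
end
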